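/- For every n ≥ 3, the nullvariety V_0 ⊆ C^{2n+1} of P_n^3 equals the union, over all S ∈ F̂_n and all S-admissible sets B, of the common zero sets Z(B) ⊆ C^{2n+1} of B. Moreover each such Z(B) is the zero locus of a prime ideal of C[x1, ..., x_{2n+1}], and for any two distinct admissible sets B ≠ B' arising from sets S, S' ∈ F̂_n, neither Z(B) ⊆ Z(B') nor Z(B') ⊆ Z(B). Hence these Z(B) are exactly the irreducible components of V_0. -/

import Mathlib

open MvPolynomial

/-- The variable `x_i` of `ℂ[x₁,…,x_{2n+1}]`, for `1 ≤ i ≤ 2n+1`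
(indices are shifted into `Fin (2n+1)`). -/
noncomputable def xv (n i : ℕ) : MvPolynomial (Fin (2 * n + 1)) ℂ :=
  X ⟨(i - 1) % (2 * n + 1), Nat.mod_lt _ (by omega)⟩

/-- The polynomial `p_a = x_{a-2} x_{a-1} + x_{a+1} x_{a+2}`. -/
noncomputable def pv (n a : ℕ) : MvPolynomial (Fin (2 * n + 1)) ℂ :=
  xv n (a - 2) * xv n (a - 1) + xv n (a + 1) * xv n (a + 2)

/-- `A'_n = {3, 5, 7, …, 2n−1}`, the odd numbers between `3` and `2n−1`. -/
def Aset' (n : ℕ) : Finset ℕ :=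
  (Finset.range (2 * n)).filter (fun a => a % 2 = 1 ∧ 3 ≤ a)

/-- `A_n = A'_n \ {3, 2n−1}`. -/
def Aset (n : ℕ) : Finset ℕ :=
  (Aset' n).filter (fun a => a ≠ 3 ∧ a ≠ 2 * n - 1)

/-- `S` is a Fibonacci subset of `A'_n`: for every `1 ≤ j ≤ n−2`,
`2j+1 ∈ S` or `2j+3 ∈ S`. -/
def IsFib (n : ℕ) (S : Finset ℕ) : Prop :=
  S ⊆ Aset' n ∧ ∀ j, 1 ≤ j → j ≤ n - 2 → (2 * j + 1 ∈ S ∨ 2 * j + 3 ∈ S)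

/-- `U1 = {x_i : i ∈ S}`. -/
noncomputable def U1 (n : ℕ) (S : Finset ℕ) : Finset (MvPolynomial (Fin (2 * n + 1)) ℂ) :=
  S.image (xv n)

/-- The allowable choices of `U2`. -/
def U2ok (n : ℕ) (S : Finset ℕ) (U : Finset (MvPolynomial (Fin (2 * n + 1)) ℂ)) : Prop :=
  (3 ∉ S ∧ 5 ∈ S ∧ U = {xv n 1, xv n 2}) ∨
  (3 ∈ S ∧ 5 ∈ S ∧ (U = {xv n 1} ∨ U = {xv n 2})) ∨
  (3 ∈ S ∧ 5 ∉ S ∧ U = {pv n 3})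

/-- The allowable choices of `U3`. -/
def U3ok (n : ℕ) (S : Finset ℕ) (U : Finset (MvPolynomial (Fin (2 * n + 1)) ℂ)) : Prop :=
  (2 * n - 1 ∉ S ∧ 2 * n - 3 ∈ S ∧ U = {xv n (2 * n), xv n (2 * n + 1)}) ∨
  (2 * n - 3 ∈ S ∧ 2 * n - 1 ∈ S ∧ (U = {xv n (2 * n)} ∨ U = {xv n (2 * n + 1)})) ∨
  (2 * n - 1 ∈ S ∧ 2 * n - 3 ∉ S ∧ U = {pv n (2 * n - 1)})

/-- The contribution `T_a` to `U4` for `a ∈ A_n`. -/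
noncomputable def Tpart (n : ℕ) (S : Finset ℕ) (a : ℕ) :
    Finset (MvPolynomial (Fin (2 * n + 1)) ℂ) :=
  if a - 2 ∈ S then (if a + 2 ∈ S then ∅ else {xv n (a + 1)})
  else (if a + 2 ∈ S then {xv n (a - 1)} else {pv n a})

/-- `U4 = ⋃_{a ∈ A_n} T_a`. -/
noncomputable def U4 (n : ℕ) (S : Finset ℕ) : Finset (MvPolynomial (Fin (2 * n + 1)) ℂ) :=
  (Aset n).biUnion (Tpart n S)

/-- `B` is an `S`-admissible set: `B = U1 ∪ U2 ∪ U3 ∪ U4` for some allowable `U2, U3`. -/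
def IsAdmissible (n : ℕ) (S : Finset ℕ) (B : Finset (MvPolynomial (Fin (2 * n + 1)) ℂ)) :
    Prop :=
  ∃ U2 U3, U2ok n S U2 ∧ U3ok n S U3 ∧ B = U1 n S ∪ U2 ∪ U3 ∪ U4 n S

/-- Every maximal run of consecutive elements of `A'_n` contained in `S` has
cardinality `1` or even cardinality. -/
def GoodRuns (S : Finset ℕ) : Prop :=
  ∀ a m : ℕ, 1 ≤ m → (∀ i < m, a + 2 * i ∈ S) → a - 2 ∉ S → a + 2 * m ∉ S →
    (m = 1 ∨ Even m)

/-- The common zero set in `ℂ^{2n+1}` of a set of polynomials. -/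
def Zset (n : ℕ) (B : Finset (MvPolynomial (Fin (2 * n + 1)) ℂ)) :
    Set (Fin (2 * n + 1) → ℂ) :=
  {z | ∀ q ∈ B, eval z q = 0}

/-- The nullvariety of `P_n^3`: the common zero set of the `2n+1` link polynomials
`x₂x₃`, `x_{2j−1}x_{2j+1}` for `1 ≤ j ≤ n`, `x_{2j−1}x_{2j} + x_{2j+2}x_{2j+3}` for
`1 ≤ j ≤ n−1`, and `x_{2n−1}x_{2n}`. -/
def nullVariety (n : ℕ) : Set (Fin (2 * n + 1) → ℂ) :=
  {z | eval z (xv n 2 * xv n 3) = 0 ∧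
       eval z (xv n (2 * n - 1) * xv n (2 * n)) = 0 ∧
       (∀ j, 1 ≤ j → j ≤ n → eval z (xv n (2 * j - 1) * xv n (2 * j + 1)) = 0) ∧
       (∀ j, 1 ≤ j → j ≤ n - 1 →
          eval z (xv n (2 * j - 1) * xv n (2 * j) + xv n (2 * j + 2) * xv n (2 * j + 3)) = 0)}

/-- the value of the `i`-th coordinate, for `1 ≤ i ≤ 2n+1` -/
noncomputable def cv {n : ℕ} (z : Fin (2 * n + 1) → ℂ) (i : ℕ) : ℂ := eval z (xv n i)

/-- the point with given coordinates -/
def ofC (n : ℕ) (f : ℕ → ℂ) : Fin (2 * n + 1) → ℂ := fun k => f (k + 1)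

theorem cv_ofC (n : ℕ) (f : ℕ → ℂ) (i : ℕ) (h1 : 1 ≤ i) (h2 : i ≤ 2 * n + 1) :
    cv (ofC n f) i = f i := by
  simp only [cv, xv, eval_X, ofC]
  congr 1
  rw [Nat.mod_eq_of_lt (by omega)]
  omega

theorem ofC_cv (n : ℕ) (z : Fin (2 * n + 1) → ℂ) : ofC n (cv z) = z := by
  funext k
  simp only [cv, xv, eval_X, ofC]
  congr 1
  ext
  have := k.2
  simp
  omega

theorem eval_xv {n : ℕ} (z : Fin (2 * n + 1) → ℂ) (i : ℕ) : eval z (xv n i) = cv z i := rfl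

theorem eval_pv {n : ℕ} (z : Fin (2 * n + 1) → ℂ) (a : ℕ) :
    eval z (pv n a) = cv z (a - 2) * cv z (a - 1) + cv z (a + 1) * cv z (a + 2) := by
  simp [pv, eval_xv]

theorem mem_Aset' {n a : ℕ} : a ∈ Aset' n ↔ a % 2 = 1 ∧ 3 ≤ a ∧ a ≤ 2 * n - 1 := by
  simp only [Aset', Finset.mem_filter, Finset.mem_range]
  omega

theorem mem_Aset {n a : ℕ} : a ∈ Aset n ↔ a % 2 = 1 ∧ 5 ≤ a ∧ a ≤ 2 * n - 3 := by
  simp only [Aset, Finset.mem_filter, mem_Aset']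
  omega

theorem mem_Z {n : ℕ} {S : Finset ℕ} {U V : Finset (MvPolynomial (Fin (2 * n + 1)) ℂ)}
    {z : Fin (2 * n + 1) → ℂ} :
    z ∈ Zset n (U1 n S ∪ U ∪ V ∪ U4 n S) ↔
      (∀ i ∈ S, cv z i = 0) ∧ (∀ q ∈ U, eval z q = 0) ∧ (∀ q ∈ V, eval z q = 0) ∧
      (∀ a ∈ Aset n, ∀ q ∈ Tpart n S a, eval z q = 0) := by
  simp only [Zset, Set.mem_ofPred_eq, Finset.mem_union, U1, U4, Finset.mem_image,
    Finset.mem_biUnion]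
  constructor
  · intro h
    refine ⟨fun i hi => h _ (Or.inl (Or.inl (Or.inl ⟨i, hi, rfl⟩))), fun q hq => h _ (by tauto),
      fun q hq => h _ (by tauto), fun a ha q hq => h _ (Or.inr ⟨a, ha, hq⟩)⟩
  · rintro ⟨h1, h2, h3, h4⟩ q (((⟨i, hi, rfl⟩ | hq) | hq) | ⟨a, ha, hq⟩)
    · exact h1 i hi
    · exact h2 q hq
    · exact h3 q hq
    · exact h4 a ha q hq

/-- The condition imposed by `T_a`. -/
def TC {n : ℕ} (S : Finset ℕ) (z : Fin (2 * n + 1) → ℂ) (a : ℕ) : Prop :=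
  (a - 2 ∈ S → a + 2 ∉ S → cv z (a + 1) = 0) ∧
  (a - 2 ∉ S → a + 2 ∈ S → cv z (a - 1) = 0) ∧
  (a - 2 ∉ S → a + 2 ∉ S → cv z (a - 2) * cv z (a - 1) + cv z (a + 1) * cv z (a + 2) = 0)

theorem Tpart_iff {n : ℕ} {S : Finset ℕ} {z : Fin (2 * n + 1) → ℂ} {a : ℕ} :
    (∀ q ∈ Tpart n S a, eval z q = 0) ↔ TC S z a := by
  unfold Tpart TC
  split_ifs with h1 h2 h2 <;> simp [h1, h2, eval_xv, eval_pv]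

theorem mem_NV {n : ℕ} (hn : 3 ≤ n) {z : Fin (2 * n + 1) → ℂ} :
    z ∈ nullVariety n ↔ cv z 2 * cv z 3 = 0 ∧ cv z (2 * n - 1) * cv z (2 * n) = 0 ∧
      (∀ a, a % 2 = 1 → a ≤ 2 * n - 1 → cv z a * cv z (a + 2) = 0) ∧
      (∀ a ∈ Aset' n, cv z (a - 2) * cv z (a - 1) + cv z (a + 1) * cv z (a + 2) = 0) := by
  simp only [nullVariety, Set.mem_ofPred_eq, map_mul, map_add, eval_xv]
  refine and_congr_right fun _ => and_congr_right fun _ => and_congr ?_ ?_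
  · constructor
    · intro h a ha1 ha2
      have := h ((a + 1) / 2) (by omega) (by omega)
      rwa [show 2 * ((a + 1) / 2) - 1 = a by omega, show 2 * ((a + 1) / 2) + 1 = a + 2 by omega]
        at this
    · intro h j h1 h2
      have := h (2 * j - 1) (by omega) (by omega)
      rwa [show 2 * j - 1 + 2 = 2 * j + 1 by omega] at this
  · constructor
    · intro h a ha
      rw [mem_Aset'] at ha
      have := h ((a - 1) / 2) (by omega) (by omega)
      rwa [show 2 * ((a - 1) / 2) - 1 = a - 2 by omega, show 2 * ((a - 1) / 2) = a - 1 by omega,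
        show a - 1 + 2 = a + 1 by omega, show a - 1 + 3 = a + 2 by omega] at this
    · intro h j h1 h2
      have := h (2 * j + 1) (by rw [mem_Aset']; omega)
      rwa [show 2 * j + 1 - 2 = 2 * j - 1 by omega, show 2 * j + 1 - 1 = 2 * j by omega] at this

theorem fib_pair {n : ℕ} {S : Finset ℕ} (h : IsFib n S) (a : ℕ) (ha : a % 2 = 1) (h3 : 3 ≤ a)
    (h4 : a ≤ 2 * n - 3) : a ∈ S ∨ a + 2 ∈ S := by
  have := h.2 ((a - 1) / 2) (by omega) (by omega)
  rwa [show 2 * ((a - 1) / 2) + 1 = a by omega, show 2 * ((a - 1) / 2) + 3 = a + 2 by omega] at this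

theorem fib_mem {n : ℕ} {S : Finset ℕ} (h : IsFib n S) {a : ℕ} (ha : a ∈ S) :
    a % 2 = 1 ∧ 3 ≤ a ∧ a ≤ 2 * n - 1 := mem_Aset'.1 (h.1 ha)

/-- Combined left-end condition. -/
theorem U2_spec {n : ℕ} {S : Finset ℕ} {U : Finset (MvPolynomial (Fin (2 * n + 1)) ℂ)}
    {z : Fin (2 * n + 1) → ℂ} (h : U2ok n S U) (hz : ∀ q ∈ U, eval z q = 0) :
    (3 ∉ S → cv z 1 = 0 ∧ cv z 2 = 0) ∧ (5 ∈ S → cv z 1 * cv z 2 = 0) ∧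
    (5 ∉ S → cv z 1 * cv z 2 + cv z 4 * cv z 5 = 0) := by
  rcases h with ⟨h1, h2, rfl⟩ | ⟨h1, h2, rfl | rfl⟩ | ⟨h1, h2, rfl⟩ <;>
  simp [eval_xv, eval_pv] at hz <;> simp [h1, h2, hz]

theorem U3_spec {n : ℕ} (hn : 3 ≤ n) {S : Finset ℕ}
    {U : Finset (MvPolynomial (Fin (2 * n + 1)) ℂ)}
    {z : Fin (2 * n + 1) → ℂ} (h : U3ok n S U) (hz : ∀ q ∈ U, eval z q = 0) :
    (2 * n - 1 ∉ S → cv z (2 * n) = 0 ∧ cv z (2 * n + 1) = 0) ∧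
    (2 * n - 3 ∈ S → cv z (2 * n) * cv z (2 * n + 1) = 0) ∧
    (2 * n - 3 ∉ S → cv z (2 * n - 3) * cv z (2 * n - 2) + cv z (2 * n) * cv z (2 * n + 1) = 0) := by
  have e1 : 2 * n - 1 - 2 = 2 * n - 3 := by omega
  have e2 : 2 * n - 1 - 1 = 2 * n - 2 := by omega
  have e3 : 2 * n - 1 + 1 = 2 * n := by omega
  have e4 : 2 * n - 1 + 2 = 2 * n + 1 := by omega
  rcases h with ⟨h1, h2, rfl⟩ | ⟨h1, h2, rfl | rfl⟩ | ⟨h1, h2, rfl⟩ <;>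
  simp [eval_xv, eval_pv, e1, e2, e3, e4] at hz <;> simp [h1, h2, hz]

theorem Z_sub_NV {n : ℕ} (hn : 3 ≤ n) {S : Finset ℕ}
    {B : Finset (MvPolynomial (Fin (2 * n + 1)) ℂ)} (hS : IsFib n S) (hB : IsAdmissible n S B) :
    Zset n B ⊆ nullVariety n := by
  obtain ⟨U, V, hU, hV, rfl⟩ := hB
  intro z hz
  rw [mem_Z] at hz
  obtain ⟨h1, h2, h3, h4⟩ := hz
  have h2 := U2_spec hU h2
  have h3 := U3_spec hn hV h3
  rw [mem_NV hn]
  have e1 : 2 * n - 1 - 2 = 2 * n - 3 := by omega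
  have e2 : 2 * n - 1 - 1 = 2 * n - 2 := by omega
  have e3 : 2 * n - 1 + 1 = 2 * n := by omega
  have e4 : 2 * n - 1 + 2 = 2 * n + 1 := by omega
  refine ⟨?_, ?_, ?_, ?_⟩
  · by_cases h : 3 ∈ S
    · simp [h1 3 h]
    · simp [h2.1 h]
  · by_cases h : 2 * n - 1 ∈ S
    · simp [h1 _ h]
    · simp [h3.1 h]
  · intro a ha1 ha2
    by_cases ha : a = 1
    · subst ha
      by_cases h : 3 ∈ S
      · simp [h1 3 h]
      · simp [h2.1 h]
    by_cases ha' : a = 2 * n - 1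
    · subst ha'
      rw [e4]
      by_cases h : 2 * n - 1 ∈ S
      · simp [h1 _ h]
      · simp [h3.1 h]
    rcases fib_pair hS a ha1 (by omega) (by omega) with h | h <;> simp [h1 _ h]
  · intro a ha
    rw [mem_Aset'] at ha
    by_cases ha3 : a = 3
    · subst ha3
      by_cases h : 5 ∈ S
      · simp [h1 5 h, h2.2.1 h]
      · simp [h2.2.2 h]
    by_cases ha' : a = 2 * n - 1
    · subst ha'
      rw [e1, e2, e3, e4]
      by_cases h : 2 * n - 3 ∈ S
      · simp [h1 _ h, h3.2.1 h]
      · simp [h3.2.2 h]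
    obtain ⟨t1, t2, t3⟩ := Tpart_iff.1 (h4 a (mem_Aset.2 (by omega)))
    by_cases k1 : a - 2 ∈ S <;> by_cases k2 : a + 2 ∈ S
    · simp [h1 _ k1, h1 _ k2]
    · simp [h1 _ k1, t1 k1 k2]
    · simp [h1 _ k2, t2 k1 k2]
    · exact t3 k1 k2

/-- Combinatorial condition ensuring that a point of the nullvariety lies in some `Z(B)`. -/
def Compat {n : ℕ} (z : Fin (2 * n + 1) → ℂ) (S : Finset ℕ) : Prop :=
  IsFib n S ∧ (∀ a ∈ S, cv z a = 0) ∧ (3 ∉ S → cv z 1 = 0 ∧ cv z 2 = 0) ∧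
  (2 * n - 1 ∉ S → cv z (2 * n) = 0 ∧ cv z (2 * n + 1) = 0) ∧
  (∀ a ∈ Aset n, (a - 2 ∈ S → a + 2 ∉ S → cv z (a + 1) = 0) ∧
    (a - 2 ∉ S → a + 2 ∈ S → cv z (a - 1) = 0))

theorem Compat.exists {n : ℕ} (hn : 3 ≤ n) {z : Fin (2 * n + 1) → ℂ} (hz : z ∈ nullVariety n)
    {S : Finset ℕ} (h : Compat z S) : ∃ B, IsAdmissible n S B ∧ z ∈ Zset n B := by
  obtain ⟨hS, h0, hl, hr, hT⟩ := h
  obtain ⟨-, -, -, hp⟩ := (mem_NV hn).1 hz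
  have e1 : 2 * n - 1 - 2 = 2 * n - 3 := by omega
  have e2 : 2 * n - 1 - 1 = 2 * n - 2 := by omega
  have e3 : 2 * n - 1 + 1 = 2 * n := by omega
  have e4 : 2 * n - 1 + 2 = 2 * n + 1 := by omega
  have hp3 := hp 3 (mem_Aset'.2 (by omega))
  have hpn := hp (2 * n - 1) (mem_Aset'.2 (by omega))
  have hU : ∃ U, U2ok n S U ∧ ∀ q ∈ U, eval z q = 0 := by
    by_cases h3 : 3 ∈ S
    · by_cases h5 : 5 ∈ S
      · have : cv z 1 * cv z 2 = 0 := by simpa [h0 5 h5] using hp3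
        rcases mul_eq_zero.1 this with h | h
        · exact ⟨{xv n 1}, by simp [U2ok, h3, h5], by simp [eval_xv, h]⟩
        · exact ⟨{xv n 2}, by simp [U2ok, h3, h5], by simp [eval_xv, h]⟩
      · exact ⟨{pv n 3}, by simp [U2ok, h3, h5], by simpa [eval_pv] using hp3⟩
    · have h5 := (fib_pair hS 3 (by omega) (by omega) (by omega)).resolve_left h3
      exact ⟨{xv n 1, xv n 2}, by simp [U2ok, h3, h5], by simp [eval_xv, hl h3]⟩
  have hV : ∃ U, U3ok n S U ∧ ∀ q ∈ U, eval z q = 0 := by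
    by_cases h3 : 2 * n - 1 ∈ S
    · by_cases h5 : 2 * n - 3 ∈ S
      · have : cv z (2 * n) * cv z (2 * n + 1) = 0 := by simpa [e1, e2, e3, e4, h0 _ h5] using hpn
        rcases mul_eq_zero.1 this with h | h
        · exact ⟨{xv n (2 * n)}, by simp [U3ok, h3, h5], by simp [eval_xv, h]⟩
        · exact ⟨{xv n (2 * n + 1)}, by simp [U3ok, h3, h5], by simp [eval_xv, h]⟩
      · exact ⟨{pv n (2 * n - 1)}, by simp [U3ok, h3, h5], by simpa [eval_pv] using hpn⟩
    · have h5 := fib_pair hS (2 * n - 3) (by omega) (by omega) (by omega)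
      rw [show 2 * n - 3 + 2 = 2 * n - 1 by omega] at h5
      have h5 := h5.resolve_right h3
      exact ⟨{xv n (2 * n), xv n (2 * n + 1)}, by simp [U3ok, h3, h5], by simp [eval_xv, hr h3]⟩
  obtain ⟨U, hU1, hU2⟩ := hU
  obtain ⟨V, hV1, hV2⟩ := hV
  refine ⟨_, ⟨U, V, hU1, hV1, rfl⟩, mem_Z.2 ⟨h0, hU2, hV2, fun a ha => ?_⟩⟩
  rw [Tpart_iff]
  refine ⟨(hT a ha).1, (hT a ha).2, fun _ _ => hp a ?_⟩
  rw [mem_Aset] at ha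
  rw [mem_Aset']
  omega

theorem Compat.base {n : ℕ} (hn : 3 ≤ n) {z : Fin (2 * n + 1) → ℂ} (hz : z ∈ nullVariety n) :
    ∃ S, Compat z S := by
  classical
  obtain ⟨hl, hr, hm, hp⟩ := (mem_NV hn).1 hz
  refine ⟨(Aset' n).filter (fun a => cv z a = 0), ⟨Finset.filter_subset _ _, ?_⟩, ?_, ?_, ?_, ?_⟩
  · intro j h1 h2
    have := hm (2 * j + 1) (by omega) (by omega)
    rw [mul_eq_zero] at this
    simp only [Finset.mem_filter, mem_Aset']
    rcases this with h | h
    · exact Or.inl ⟨by omega, h⟩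
    · exact Or.inr ⟨by omega, h⟩
  · intro a ha
    exact (Finset.mem_filter.1 ha).2
  · intro h
    have h3 : cv z 3 ≠ 0 := fun h' => h (Finset.mem_filter.2 ⟨mem_Aset'.2 (by omega), h'⟩)
    have := hm 1 (by omega) (by omega)
    simp [h3] at this hl
    exact ⟨this, hl⟩
  · intro h
    have h3 : cv z (2 * n - 1) ≠ 0 :=
      fun h' => h (Finset.mem_filter.2 ⟨mem_Aset'.2 (by omega), h'⟩)
    have := hm (2 * n - 1) (by omega) (by omega)
    rw [show 2 * n - 1 + 2 = 2 * n + 1 by omega] at this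
    simp [h3] at this hr
    exact ⟨hr, this⟩
  · intro a ha
    rw [mem_Aset] at ha
    have hpa := hp a (mem_Aset'.2 (by omega))
    constructor
    · intro h1 h2
      have h1 := (Finset.mem_filter.1 h1).2
      have h3 : cv z (a + 2) ≠ 0 :=
        fun h' => h2 (Finset.mem_filter.2 ⟨mem_Aset'.2 (by omega), h'⟩)
      simpa [h1, h3] using hpa
    · intro h2 h1
      have h1 := (Finset.mem_filter.1 h1).2
      have h3 : cv z (a - 2) ≠ 0 :=
        fun h' => h2 (Finset.mem_filter.2 ⟨mem_Aset'.2 (by omega), h'⟩)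
      simpa [h1, h3] using hpa

theorem Compat.step {n : ℕ} (hn : 3 ≤ n) {z : Fin (2 * n + 1) → ℂ} {S : Finset ℕ}
    (h : Compat z S) (hg : ¬ GoodRuns S) : ∃ S' : Finset ℕ, S'.card < S.card ∧ Compat z S' := by
  classical
  unfold GoodRuns at hg
  push Not at hg
  obtain ⟨a, m, hm1, hrun, hL, hR, hne, hodd⟩ := hg
  obtain ⟨hS, h0, hl, hr, hT⟩ := h
  obtain ⟨k, rfl⟩ : ∃ k, m = 2 * k + 1 := by simpa [Odd] using hodd
  -- the removed elements
  have haS : a ∈ S := by simpa using hrun 0 (by omega)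
  have ha := fib_mem hS haS
  have hmem : ∀ b, b ∈ S.filter (fun b => ¬ ∃ i < k, b = a + 2 * (2 * i + 1)) ↔
      b ∈ S ∧ ¬ ∃ i < k, b = a + 2 * (2 * i + 1) := fun b => Finset.mem_filter
  set S' := S.filter (fun b => ¬ ∃ i < k, b = a + 2 * (2 * i + 1)) with hS'
  have hev : ∀ i ≤ k, a + 4 * i ∈ S' := by
    intro i hi
    rw [hmem]
    refine ⟨?_, ?_⟩
    · have := hrun (2 * i) (by omega)
      rwa [show a + 2 * (2 * i) = a + 4 * i by ring] at this
    · rintro ⟨j, hj, e⟩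
      omega
  have hrem : ∀ b, b ∉ S' → b ∈ S → ∃ i < k, b = a + 2 * (2 * i + 1) := by
    intro b h1 h2
    by_contra h3
    exact h1 ((hmem b).2 ⟨h2, h3⟩)
  have hsub : ∀ b, b ∈ S' → b ∈ S := fun b hb => ((hmem b).1 hb).1
  refine ⟨S', ?_, ⟨fun b hb => hS.1 (hsub b hb), ?_⟩, fun b hb => h0 b (hsub b hb), ?_, ?_, ?_⟩
  · apply Finset.card_lt_card
    refine ⟨fun b hb => hsub b hb, fun hh => ?_⟩
    have := hh (hrun 1 (by omega))
    rw [hmem] at this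
    exact this.2 ⟨0, by omega, by ring⟩
  · intro j h1 h2
    rcases hS.2 j h1 h2 with h | h
    · by_cases h' : 2 * j + 1 ∈ S'
      · exact Or.inl h'
      · obtain ⟨i, hi, e⟩ := hrem _ h' h
        right
        have := hev (i + 1) (by omega)
        rwa [show a + 4 * (i + 1) = 2 * j + 3 by omega] at this
    · by_cases h' : 2 * j + 3 ∈ S'
      · exact Or.inr h'
      · obtain ⟨i, hi, e⟩ := hrem _ h' h
        left
        have := hev i (by omega)
        rwa [show a + 4 * i = 2 * j + 1 by omega] at this
  · intro h
    apply hl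
    intro h'
    obtain ⟨i, hi, e⟩ := hrem _ h h'
    omega
  · intro h
    apply hr
    intro h'
    obtain ⟨i, hi, e⟩ := hrem _ h h'
    have := fib_mem hS (hsub _ (hev (i + 1) (by omega)))
    omega
  · intro b hb
    rw [mem_Aset] at hb
    constructor
    · intro h1 h2
      refine (hT b (mem_Aset.2 hb)).1 (hsub _ h1) fun h3 => ?_
      obtain ⟨i, hi, e⟩ := hrem _ h2 h3
      rcases i with _ | i
      · apply hL
        rw [show a - 2 = b - 2 by omega]
        exact hsub _ h1
      · exact ((hmem _).1 h1).2 ⟨i, by omega, by omega⟩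
    · intro h2 h1
      refine (hT b (mem_Aset.2 hb)).2 (fun h3 => ?_) (hsub _ h1)
      obtain ⟨i, hi, e⟩ := hrem _ h2 h3
      by_cases hik : i + 1 < k
      · exact ((hmem _).1 h1).2 ⟨i + 1, by omega, by omega⟩
      · apply hR
        rw [show a + 2 * (2 * k + 1) = b + 2 by omega]
        exact hsub _ h1

theorem NV_sub {n : ℕ} (hn : 3 ≤ n) {z : Fin (2 * n + 1) → ℂ} (hz : z ∈ nullVariety n) :
    ∃ S, (IsFib n S ∧ GoodRuns S) ∧ ∃ B, IsAdmissible n S B ∧ z ∈ Zset n B := by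
  have key : ∀ N : ℕ, ∀ S : Finset ℕ, S.card = N → Compat z S →
      ∃ S', Compat z S' ∧ GoodRuns S' := by
    intro N
    induction N using Nat.strong_induction_on with
    | _ N ih =>
      intro S hS hC
      by_cases hg : GoodRuns S
      · exact ⟨S, hC, hg⟩
      · obtain ⟨S', h1, h2⟩ := hC.step hn hg
        exact ih S'.card (by omega) S' rfl h2
  obtain ⟨S, hS⟩ := Compat.base hn hz
  obtain ⟨S', h1, h2⟩ := key _ S rfl hS
  exact ⟨S', ⟨h1.1, h2⟩, h1.exists hn hz⟩

/-- coordinate points -/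
noncomputable def ept (n i : ℕ) : Fin (2 * n + 1) → ℂ := ofC n (fun k => if k = i then 1 else 0)

theorem cv_ept {n i j : ℕ} (h1 : 1 ≤ j) (h2 : j ≤ 2 * n + 1) :
    cv (ept n i) j = if j = i then 1 else 0 := cv_ofC n _ j h1 h2

theorem pv_ept {n i a : ℕ} (h1 : 3 ≤ a) (h2 : a ≤ 2 * n - 1) :
    eval (ept n i) (pv n a) = 0 := by
  rw [eval_pv, cv_ept (by omega) (by omega), cv_ept (by omega) (by omega),
    cv_ept (by omega) (by omega), cv_ept (by omega) (by omega)]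
  split_ifs <;> first | omega | simp

theorem ept_mem_Z {n : ℕ} (hn : 3 ≤ n) {S : Finset ℕ}
    {U V : Finset (MvPolynomial (Fin (2 * n + 1)) ℂ)}
    (hS : IsFib n S) (i : ℕ) (hi : i ∉ S)
    (hU : ∀ q ∈ U, eval (ept n i) q = 0) (hV : ∀ q ∈ V, eval (ept n i) q = 0)
    (hT1 : ∀ a ∈ Aset n, a - 2 ∈ S → a + 2 ∉ S → i ≠ a + 1)
    (hT2 : ∀ a ∈ Aset n, a - 2 ∉ S → a + 2 ∈ S → i ≠ a - 1) :
    ept n i ∈ Zset n (U1 n S ∪ U ∪ V ∪ U4 n S) := by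
  rw [mem_Z]
  refine ⟨?_, hU, hV, ?_⟩
  · intro j hj
    have := fib_mem hS hj
    rw [cv_ept (by omega) (by omega), if_neg]
    rintro rfl
    exact hi hj
  · intro a ha
    rw [Tpart_iff]
    have ha' := mem_Aset.1 ha
    refine ⟨fun h1 h2 => ?_, fun h1 h2 => ?_, fun _ _ => ?_⟩
    · rw [cv_ept (by omega) (by omega), if_neg (hT1 a ha h1 h2).symm]
    · rw [cv_ept (by omega) (by omega), if_neg (hT2 a ha h1 h2).symm]
    · rw [← eval_pv, pv_ept (by omega) (by omega)]

theorem U2_ept {n : ℕ} (hn : 3 ≤ n) {S : Finset ℕ} {U : Finset (MvPolynomial (Fin (2 * n + 1)) ℂ)}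
    (h : U2ok n S U) (i : ℕ) (h1 : i ≠ 1) (h2 : i ≠ 2) : ∀ q ∈ U, eval (ept n i) q = 0 := by
  have c1 : cv (ept n i) 1 = 0 := by rw [cv_ept (by omega) (by omega), if_neg h1.symm]
  have c2 : cv (ept n i) 2 = 0 := by rw [cv_ept (by omega) (by omega), if_neg h2.symm]
  have c3 : eval (ept n i) (pv n 3) = 0 := pv_ept (by omega) (by omega)
  rcases h with ⟨-, -, rfl⟩ | ⟨-, -, rfl | rfl⟩ | ⟨-, -, rfl⟩ <;>
  simp [eval_xv, c1, c2, c3]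

theorem U3_ept {n : ℕ} (hn : 3 ≤ n) {S : Finset ℕ} {U : Finset (MvPolynomial (Fin (2 * n + 1)) ℂ)}
    (h : U3ok n S U) (i : ℕ) (h1 : i ≠ 2 * n) (h2 : i ≠ 2 * n + 1) :
    ∀ q ∈ U, eval (ept n i) q = 0 := by
  have c1 : cv (ept n i) (2 * n) = 0 := by rw [cv_ept (by omega) (by omega), if_neg h1.symm]
  have c2 : cv (ept n i) (2 * n + 1) = 0 := by rw [cv_ept (by omega) (by omega), if_neg h2.symm]
  have c3 : eval (ept n i) (pv n (2 * n - 1)) = 0 := pv_ept (by omega) (by omega)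
  rcases h with ⟨-, -, rfl⟩ | ⟨-, -, rfl | rfl⟩ | ⟨-, -, rfl⟩ <;>
  simp [eval_xv, c1, c2, c3]

theorem ept_left {n : ℕ} (hn : 3 ≤ n) {S : Finset ℕ}
    {U V : Finset (MvPolynomial (Fin (2 * n + 1)) ℂ)}
    (hS : IsFib n S) (hV : U3ok n S V) (i : ℕ) (hi : i = 1 ∨ i = 2)
    (hU : ∀ q ∈ U, eval (ept n i) q = 0) :
    ept n i ∈ Zset n (U1 n S ∪ U ∪ V ∪ U4 n S) := by
  refine ept_mem_Z hn hS i (fun h => ?_) hU (U3_ept hn hV i (by omega) (by omega)) ?_ ?_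
  · have := fib_mem hS h
    omega
  · intro a ha
    have := mem_Aset.1 ha
    omega
  · intro a ha
    have := mem_Aset.1 ha
    omega

theorem ept_right {n : ℕ} (hn : 3 ≤ n) {S : Finset ℕ}
    {U V : Finset (MvPolynomial (Fin (2 * n + 1)) ℂ)}
    (hS : IsFib n S) (hU : U2ok n S U) (i : ℕ) (hi : i = 2 * n ∨ i = 2 * n + 1)
    (hV : ∀ q ∈ V, eval (ept n i) q = 0) :
    ept n i ∈ Zset n (U1 n S ∪ U ∪ V ∪ U4 n S) := by
  refine ept_mem_Z hn hS i (fun h => ?_) (U2_ept hn hU i (by omega) (by omega)) hV ?_ ?_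
  · have := fib_mem hS h
    omega
  · intro a ha
    have := mem_Aset.1 ha
    omega
  · intro a ha
    have := mem_Aset.1 ha
    omega

theorem not_sub {n : ℕ} (hn : 3 ≤ n) {S S' : Finset ℕ}
    {B B' : Finset (MvPolynomial (Fin (2 * n + 1)) ℂ)} (hS : IsFib n S) (hg : GoodRuns S)
    (hB : IsAdmissible n S B) (hS' : IsFib n S') (hB' : IsAdmissible n S' B') (hne : B ≠ B') :
    ¬ Zset n B ⊆ Zset n B' := by
  intro hsub
  obtain ⟨U, V, hU, hV, rfl⟩ := hB
  obtain ⟨U', V', hU', hV', rfl⟩ := hB'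
  have hss : ∀ z, z ∈ Zset n (U1 n S ∪ U ∪ V ∪ U4 n S) → _ := fun z hz => mem_Z.1 (hsub hz)
  -- `S' ⊆ S`
  have F1 : ∀ a ∈ S', a ∈ S := by
    intro a ha
    by_contra hna
    have h3 := fib_mem hS' ha
    have := (hss (ept n a) (ept_mem_Z hn hS a hna (U2_ept hn hU a (by omega) (by omega))
      (U3_ept hn hV a (by omega) (by omega))
      (fun b hb _ _ => by have := mem_Aset.1 hb; omega)
      (fun b hb _ _ => by have := mem_Aset.1 hb; omega))).1 a ha
    rw [cv_ept (by omega) (by omega)] at this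
    simp at this
  -- even variables inside a run do not vanish
  have F2 : ∀ a, a ∈ S → a + 2 ∈ S → ∀ b ∈ Aset n, TC S' (ept n (a + 1)) b := by
    intro a ha ha2
    have h3 := fib_mem hS ha
    have h4 := fib_mem hS ha2
    have := (hss (ept n (a + 1)) (ept_mem_Z hn hS (a + 1)
      (fun h => by have := fib_mem hS h; omega)
      (U2_ept hn hU _ (by omega) (by omega))
      (U3_ept hn hV _ (by omega) (by omega))
      (fun b hb _ h e => by
        obtain rfl : a = b := by omega
        exact h ha2)
      (fun b hb h _ e => by
        have := mem_Aset.1 hb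
        obtain rfl : a = b - 2 := by omega
        exact h ha))).2.2.2
    exact fun b hb => Tpart_iff.1 (this b hb)
  have F2a : ∀ a, a ∈ S → a + 2 ∈ S → 5 ≤ a → a - 2 ∈ S' → a + 2 ∈ S' := by
    intro a ha ha2 h5 h
    by_contra h'
    have h4 := fib_mem hS ha2
    have := (F2 a ha ha2 a (mem_Aset.2 (by omega))).1 h h'
    rw [cv_ept (by omega) (by omega)] at this
    simp at this
  have F2b : ∀ a, a ∈ S → a + 2 ∈ S → a + 4 ∈ S' → a ∈ S' := by
    intro a ha ha2 h
    by_contra h'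
    have h4 := fib_mem hS ha
    have h6 := fib_mem hS' h
    have := (F2 a ha ha2 (a + 2) (mem_Aset.2 (by omega))).2.1 h' h
    rw [cv_ept (by omega) (by omega)] at this
    simp at this
  have F3 : 3 ∈ S → 3 ∈ S' := by
    intro h3
    by_contra h3'
    have key : ∀ i, (i = 1 ∨ i = 2) → ¬ ∀ q ∈ U, eval (ept n i) q = 0 := by
      intro i hi hq
      have h := (U2_spec hU' (hss _ (ept_left hn hS hV i hi hq)).2.1).1 h3'
      rw [cv_ept (by omega) (by omega), cv_ept (by omega) (by omega)] at h
      rcases hi with rfl | rfl <;> simp at h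
    rcases hU with ⟨h, -, rfl⟩ | ⟨-, -, rfl | rfl⟩ | ⟨-, -, rfl⟩
    · exact h h3
    · apply key 2 (by omega)
      simp [eval_xv, cv_ept (n := n) (i := 2) (j := 1) (by omega) (by omega)]
    · apply key 1 (by omega)
      simp [eval_xv, cv_ept (n := n) (i := 1) (j := 2) (by omega) (by omega)]
    · apply key 1 (by omega)
      simp [pv_ept (n := n) (i := 1) (a := 3) (by omega) (by omega)]
  have F4 : 2 * n - 1 ∈ S → 2 * n - 1 ∈ S' := by
    intro h3
    by_contra h3'
    have key : ∀ i, (i = 2 * n ∨ i = 2 * n + 1) → ¬ ∀ q ∈ V, eval (ept n i) q = 0 := by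
      intro i hi hq
      have h := (U3_spec hn hV' (hss _ (ept_right hn hS hU i hi hq)).2.2.1).1 h3'
      rw [cv_ept (by omega) (by omega), cv_ept (by omega) (by omega)] at h
      rcases hi with rfl | rfl <;> simp at h
    rcases hV with ⟨h, -, rfl⟩ | ⟨-, -, rfl | rfl⟩ | ⟨-, -, rfl⟩
    · exact h h3
    · apply key (2 * n + 1) (by omega)
      simp [eval_xv, cv_ept (n := n) (i := 2 * n + 1) (j := 2 * n) (by omega) (by omega)]
    · apply key (2 * n) (by omega)
      simp [eval_xv, cv_ept (n := n) (i := 2 * n) (j := 2 * n + 1) (by omega) (by omega)]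
    · apply key (2 * n) (by omega)
      simp [pv_ept (n := n) (i := 2 * n) (a := 2 * n - 1) (by omega) (by omega)]
  -- `S = S'`
  have F5 : S = S' := by
    by_contra hSS
    have hex : ∃ a, a ∈ S ∧ a ∉ S' := by
      by_contra hcon
      push Not at hcon
      exact hSS (Finset.Subset.antisymm hcon F1)
    classical
    let a := Nat.find hex
    obtain ⟨ha, ha'⟩ : a ∈ S ∧ a ∉ S' := Nat.find_spec hex
    have hmin : ∀ b < a, b ∈ S → b ∈ S' := by
      intro b hb hbS
      by_contra hb'
      exact Nat.find_min hex hb ⟨hbS, hb'⟩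
    have hao := fib_mem hS ha
    have ha3 : a ≠ 3 := fun e => ha' (e ▸ F3 (e ▸ ha))
    obtain ⟨r, hr⟩ : ∃ r, a = r + 2 := ⟨a - 2, by omega⟩
    have hrS' : r ∈ S' := by
      rcases fib_pair hS' r (by omega) (by omega) (by omega) with h | h
      · exact h
      · exact absurd h (hr ▸ ha')
    have hrS := F1 r hrS'
    rw [hr] at ha ha'
    have hL : r - 2 ∉ S := by
      intro h
      have h5 := fib_mem hS h
      exact ha' (F2a r hrS ha (by omega) (hmin _ (by omega) h))
    have key : ∀ k, (∀ i < 2 * k + 2, r + 2 * i ∈ S) ∧ r + 2 * (2 * k + 1) ∉ S' := by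
      intro k
      induction k with
      | zero =>
        refine ⟨fun i hi => ?_, ha'⟩
        obtain rfl | rfl : i = 0 ∨ i = 1 := by omega
        · exact hrS
        · exact ha
      | succ k ih =>
        obtain ⟨i1, i2⟩ := ih
        have hlast := i1 (2 * k + 1) (by omega)
        have hl := fib_mem hS hlast
        have hn1 : r + 2 * (2 * k + 1) ≠ 2 * n - 1 := by
          intro e
          rw [e] at i2 hlast
          exact i2 (F4 hlast)
        have hnext := (fib_pair hS' _ hl.1 hl.2.1 (by omega)).resolve_left i2
        have hnextS := F1 _ hnext
        have h2 : r + 2 * (2 * k + 1) + 4 ∉ S' := fun h => i2 (F2b _ hlast hnextS h)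
        have hrun : ∀ i < 2 * k + 3, r + 2 * i ∈ S := by
          intro i hi
          by_cases h : i < 2 * k + 2
          · exact i1 i h
          · obtain rfl : i = 2 * k + 2 := by omega
            exact hnextS
        refine ⟨fun i hi => ?_, ?_⟩
        · by_cases h : i < 2 * k + 3
          · exact hrun i h
          · obtain rfl : i = 2 * k + 3 := by omega
            by_contra hend
            rcases hg r (2 * k + 3) (by omega) hrun hL hend with h | h
            · omega
            · rw [Nat.even_iff] at h
              omega
        · exact h2
    have := fib_mem hS ((key n).1 n (by omega))
    omega
  subst F5
  apply hne
  have hUU : U = U' := by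
    rcases hU with ⟨h3, h5, rfl⟩ | ⟨h3, h5, rfl | rfl⟩ | ⟨h3, h5, rfl⟩ <;>
    rcases hU' with ⟨h3', h5', rfl⟩ | ⟨h3', h5', rfl | rfl⟩ | ⟨h3', h5', rfl⟩ <;>
    first
    | rfl
    | contradiction
    | skip
    · have := (hss _ (ept_left (U := {xv n 1}) hn hS hV 2 (by omega) (by
        simp [eval_xv, cv_ept (n := n) (i := 2) (j := 1) (by omega) (by omega)]))).2.1
      simp [eval_xv, cv_ept (n := n) (i := 2) (j := 2) (by omega) (by omega)] at this
    · have := (hss _ (ept_left (U := {xv n 2}) hn hS hV 1 (by omega) (by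
        simp [eval_xv, cv_ept (n := n) (i := 1) (j := 2) (by omega) (by omega)]))).2.1
      simp [eval_xv, cv_ept (n := n) (i := 1) (j := 1) (by omega) (by omega)] at this
  have hVV : V = V' := by
    rcases hV with ⟨h3, h5, rfl⟩ | ⟨h3, h5, rfl | rfl⟩ | ⟨h3, h5, rfl⟩ <;>
    rcases hV' with ⟨h3', h5', rfl⟩ | ⟨h3', h5', rfl | rfl⟩ | ⟨h3', h5', rfl⟩ <;>
    first
    | rfl
    | contradiction
    | skip
    · have := (hss _ (ept_right (V := {xv n (2 * n)}) hn hS hU (2 * n + 1) (by omega) (by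
        simp [eval_xv, cv_ept (n := n) (i := 2 * n + 1) (j := 2 * n) (by omega) (by omega)]))).2.2.1
      simp [eval_xv, cv_ept (n := n) (i := 2 * n + 1) (j := 2 * n + 1) (by omega) (by omega)]
        at this
    · have := (hss _ (ept_right (V := {xv n (2 * n + 1)}) hn hS hU (2 * n) (by omega) (by
        simp [eval_xv, cv_ept (n := n) (i := 2 * n) (j := 2 * n + 1) (by omega) (by omega)]))).2.2.1
      simp [eval_xv, cv_ept (n := n) (i := 2 * n) (j := 2 * n) (by omega) (by omega)] at this
  rw [hUU, hVV]

/-- points (given by coordinate functions) satisfying the equations of type `(V, Q)` -/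
def ZZ (V Q : ℕ → Prop) (f : ℕ → ℂ) : Prop :=
  (∀ i, V i → f i = 0) ∧ (∀ a, Q a → f (a - 2) * f (a - 1) + f (a + 1) * f (a + 2) = 0)

/-- compatibility of the sets `V`, `Q` -/
def VQ (n : ℕ) (V Q : ℕ → Prop) : Prop :=
  (∀ i, V i → 1 ≤ i ∧ i ≤ 2 * n + 1) ∧
  (∀ a, Q a → a % 2 = 1 ∧ 3 ≤ a ∧ a ≤ 2 * n - 1 ∧ ¬ V (a - 2) ∧ ¬ V (a - 1) ∧ ¬ V (a + 1) ∧
    ¬ V (a + 2) ∧ ¬ Q (a - 2) ∧ ¬ Q (a + 2))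

theorem lim_line (n : ℕ) (q : MvPolynomial (Fin (2 * n + 1)) ℂ) (f d : ℕ → ℂ)
    (h : ∀ᶠ s in nhdsWithin (0 : ℂ) {0}ᶜ, eval (ofC n (fun i => f i + s * d i)) q = 0) :
    eval (ofC n f) q = 0 := by
  have hc : Continuous (fun s : ℂ => eval (ofC n (fun i => f i + s * d i)) q) := by
    apply (MvPolynomial.continuous_eval q).comp
    apply continuous_pi
    intro k
    simp only [ofC]
    fun_prop
  have h1 : Filter.Tendsto (fun s : ℂ => eval (ofC n (fun i => f i + s * d i)) q)
      (nhdsWithin (0 : ℂ) {0}ᶜ) (nhds (eval (ofC n f) q)) := by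
    have := (hc.tendsto 0).mono_left (nhdsWithin_le_nhds (s := {0}ᶜ))
    simpa using this
  have h2 : Filter.Tendsto (fun s : ℂ => eval (ofC n (fun i => f i + s * d i)) q)
      (nhdsWithin (0 : ℂ) {0}ᶜ) (nhds 0) :=
    tendsto_const_nhds.congr' (h.mono fun s hs => hs.symm)
  exact tendsto_nhds_unique h1 h2

theorem ev_ne (a c : ℂ) (hc : c ≠ 0) :
    ∀ᶠ s in nhdsWithin (0 : ℂ) {0}ᶜ, a + s * c ≠ 0 := by
  by_cases ha : a = 0
  · subst ha
    filter_upwards [self_mem_nhdsWithin] with s hs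
    simpa [hc] using hs
  · apply Filter.Eventually.filter_mono nhdsWithin_le_nhds
    have : Continuous (fun s : ℂ => a + s * c) := by fun_prop
    apply (this.tendsto 0).eventually_ne
    simpa using ha

theorem exists_t {V Q : ℕ → Prop} {f : ℕ → ℂ} (hf : ZZ V Q f) :
    ∃ t : ℕ → ℂ, ∀ a, Q a → (f (a - 2) ≠ 0 ∨ f (a + 2) ≠ 0) →
      f (a - 1) = f (a + 2) * t a ∧ f (a + 1) = - (f (a - 2) * t a) := by
  have : ∀ a, ∃ t : ℂ, Q a → (f (a - 2) ≠ 0 ∨ f (a + 2) ≠ 0) →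
      f (a - 1) = f (a + 2) * t ∧ f (a + 1) = - (f (a - 2) * t) := by
    intro a
    by_cases h2 : f (a + 2) = 0
    · refine ⟨-f (a + 1) / f (a - 2), fun hQ h => ?_⟩
      have h1 : f (a - 2) ≠ 0 := by tauto
      have := hf.2 a hQ
      simp [h2, h1] at this
      refine ⟨by simp [this, h2], by field_simp⟩
    · refine ⟨f (a - 1) / f (a + 2), fun hQ h => ⟨by field_simp, ?_⟩⟩
      have := hf.2 a hQ
      field_simp
      linear_combination this
  choose t ht using this
  exact ⟨t, ht⟩

open Classical in
/-- the parametrization -/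
noncomputable def par (V Q : ℕ → Prop) (i : ℕ) : MvPolynomial ℕ ℂ :=
  if V i then 0 else if Q (i + 1) then X (i + 3) * X i
  else if Q (i - 1) then - (X (i - 3) * X (i - 2)) else X i

/-- the parametrization as a ring homomorphism -/
noncomputable def parHom (n : ℕ) (V Q : ℕ → Prop) :
    MvPolynomial (Fin (2 * n + 1)) ℂ →ₐ[ℂ] MvPolynomial ℕ ℂ :=
  aeval (fun k : Fin (2 * n + 1) => par V Q (k + 1))

theorem parHom_xv (n : ℕ) (V Q : ℕ → Prop) (i : ℕ) (h1 : 1 ≤ i) (h2 : i ≤ 2 * n + 1) :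
    parHom n V Q (xv n i) = par V Q i := by
  simp only [parHom, xv, aeval_X]
  congr 1
  rw [Nat.mod_eq_of_lt (by omega)]
  omega

theorem vanish_image {n : ℕ} {V Q : ℕ → Prop} {q : MvPolynomial (Fin (2 * n + 1)) ℂ}
    (hq : parHom n V Q q = 0) {f w : ℕ → ℂ}
    (h : ∀ i, 1 ≤ i → i ≤ 2 * n + 1 → eval w (par V Q i) = f i) : eval (ofC n f) q = 0 := by
  have e : (eval (ofC n f) : MvPolynomial (Fin (2 * n + 1)) ℂ →+* ℂ) =
      (eval w).comp (parHom n V Q).toRingHom := by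
    apply MvPolynomial.ringHom_ext
    · intro r
      simp [parHom]
    · intro k
      simp [parHom, ofC, h (k + 1) (by omega) (by omega)]
  rw [e]
  simp [hq]

theorem vanish1 {n : ℕ} {V Q : ℕ → Prop} (hVQ : VQ n V Q)
    {q : MvPolynomial (Fin (2 * n + 1)) ℂ}
    (hq : parHom n V Q q = 0) {f : ℕ → ℂ} (hf : ZZ V Q f)
    (hnd : ∀ a, Q a → f (a - 2) ≠ 0 ∨ f (a + 2) ≠ 0) : eval (ofC n f) q = 0 := by
  classical
  obtain ⟨t, ht⟩ := exists_t hf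
  apply vanish_image hq (w := fun i => if Q (i + 1) then t (i + 1) else f i)
  intro i h1 h2
  unfold par
  split_ifs with hV hQ hQ'
  · simp [hf.1 i hV]
  · have hh := hVQ.2 _ hQ
    have h4 : ¬ Q (i + 3 + 1) := fun h => by have := hVQ.2 _ h; omega
    have := (ht _ hQ (hnd _ hQ)).1
    simp only [map_mul, eval_X, hQ, h4, if_true, if_false]
    exact this.symm
  · have hh := hVQ.2 _ hQ'
    obtain ⟨a, rfl⟩ : ∃ a, i = a + 1 := ⟨i - 1, by omega⟩
    rw [show a + 1 - 1 = a by omega] at hQ'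
    have h4 : ¬ Q (a - 2 + 1) := fun h => by have := hVQ.2 _ h; omega
    have := (ht _ hQ' (hnd _ hQ')).2
    simp only [map_neg, map_mul, eval_X, show a + 1 - 3 = a - 2 by omega,
      show a + 1 - 2 + 1 = a by omega, h4, hQ', if_true, if_false]
    exact this.symm
  · simp [hQ]

/-- perturbation directions -/
noncomputable def cseq (P : ℕ → Prop) (f : ℕ → ℂ) : ℕ → ℂ
  | 0 => 1
  | 1 => 1
  | 2 => 1
  | 3 => 1
  | (k + 4) => open Classical in
      if P (k + 2) then - (cseq P f k * f (k + 1) / f (k + 3)) else 1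

theorem cseq_ne (P : ℕ → Prop) (f : ℕ → ℂ) (h : ∀ a, P a → f (a - 1) ≠ 0 ∧ f (a + 1) ≠ 0) (i : ℕ) :
    cseq P f i ≠ 0 := by
  induction i using Nat.strong_induction_on with
  | _ i ih =>
    rcases i with _ | _ | _ | _ | k
    · simp [cseq]
    · simp [cseq]
    · simp [cseq]
    · simp [cseq]
    · rw [cseq]
      split_ifs with hP
      · have := h _ hP
        have h1 : f (k + 1) ≠ 0 := this.1
        have h3 : f (k + 3) ≠ 0 := this.2
        have := ih k (by omega)
        simp [h1, h3, this]
      · simp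

theorem vanish2 {n : ℕ} {V Q : ℕ → Prop} (hVQ : VQ n V Q)
    {q : MvPolynomial (Fin (2 * n + 1)) ℂ}
    (hq : parHom n V Q q = 0) {f : ℕ → ℂ} (hf : ZZ V Q f)
    (hnd : ∀ a, Q a → f (a - 2) = 0 → f (a + 2) = 0 → f (a - 1) ≠ 0 ∧ f (a + 1) ≠ 0) :
    eval (ofC n f) q = 0 := by
  classical
  obtain ⟨t, ht⟩ := exists_t hf
  obtain ⟨P, hP⟩ : ∃ P : ℕ → Prop, ∀ a, P a ↔ Q a ∧ f (a - 2) = 0 ∧ f (a + 2) = 0 :=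
    ⟨_, fun _ => Iff.rfl⟩
  have hPf : ∀ a, P a → f (a - 1) ≠ 0 ∧ f (a + 1) ≠ 0 := fun a ha => by
    obtain ⟨h1, h2, h3⟩ := (hP a).1 ha
    exact hnd a h1 h2 h3
  have hc := cseq_ne P f hPf
  have hcP : ∀ a, P a → cseq P f (a - 2) * f (a - 1) + f (a + 1) * cseq P f (a + 2) = 0 := by
    intro a ha
    have h3 := hVQ.2 a ((hP a).1 ha).1
    obtain ⟨k, rfl⟩ : ∃ k, a = k + 2 := ⟨a - 2, by omega⟩
    have h4 : f (k + 3) ≠ 0 := (hPf _ ha).2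
    rw [show k + 2 + 2 = k + 4 by omega, cseq, if_pos ha, show k + 2 - 2 = k by omega,
      show k + 2 - 1 = k + 1 by omega, show k + 2 + 1 = k + 3 by omega]
    field_simp
    ring
  set c := cseq P f with hcdef
  let d : ℕ → ℂ := fun i => if V i then 0 else if i % 2 = 1 then c i
    else if Q (i + 1) ∧ ¬ P (i + 1) then c (i + 3) * t (i + 1)
    else if Q (i - 1) ∧ ¬ P (i - 1) then - (c (i - 3) * t (i - 1)) else 0
  have d1 : ∀ i, i % 2 = 1 → ¬ V i → d i = c i := by
    intro i h1 h2
    simp [d, h1, h2]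
  have d0 : ∀ i, V i → d i = 0 := by
    intro i h
    simp [d, h]
  have dm : ∀ a, Q a → d (a - 1) = if P a then 0 else c (a + 2) * t a := by
    intro a ha
    have hh := hVQ.2 a ha
    have e : a - 1 - 1 = a - 2 := by omega
    have e2 : a - 1 + 1 = a := by omega
    have e3 : a - 1 + 3 = a + 2 := by omega
    have hev : ¬ ((a - 1) % 2 = 1) := by omega
    simp only [d, e, e2, e3, hh, hev, if_false, ha, true_and, false_and]
    split_ifs <;> simp_all
  have dp : ∀ a, Q a → d (a + 1) = if P a then 0 else - (c (a - 2) * t a) := by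
    intro a ha
    have hh := hVQ.2 a ha
    have e : a + 1 - 1 = a := by omega
    have e2 : a + 1 + 1 = a + 2 := by omega
    have e3 : a + 1 - 3 = a - 2 := by omega
    have hev : ¬ ((a + 1) % 2 = 1) := by omega
    simp only [d, e, e2, e3, hh, hev, if_false, ha, true_and, false_and]
    split_ifs <;> simp_all
  apply lim_line n q f d
  have hall : ∀ᶠ s in nhdsWithin (0 : ℂ) {0}ᶜ, ∀ i ∈ Finset.range (2 * n + 2), f i + s * c i ≠ 0 :=
    (Filter.eventually_all_finset _).2 fun i _ => ev_ne _ _ (hc i)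
  filter_upwards [hall] with s hs
  apply vanish1 hVQ hq
  · refine ⟨fun i hi => by simp [hf.1 i hi, d0 i hi], fun a ha => ?_⟩
    have hh := hVQ.2 a ha
    beta_reduce
    rw [d1 (a - 2) (by omega) hh.2.2.2.1, d1 (a + 2) (by omega) hh.2.2.2.2.2.2.1, dm a ha, dp a ha]
    by_cases hPa : P a
    · obtain ⟨-, h2, h3⟩ := (hP a).1 hPa
      simp only [if_pos hPa, h2, h3]
      linear_combination s * hcP a hPa
    · simp only [if_neg hPa]
      have : f (a - 2) ≠ 0 ∨ f (a + 2) ≠ 0 := by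
        by_contra hcon
        push Not at hcon
        exact hPa ((hP a).2 ⟨ha, hcon⟩)
      obtain ⟨t1, t2⟩ := ht a ha this
      rw [t1, t2]
      ring
  · intro a ha
    have hh := hVQ.2 a ha
    left
    rw [d1 (a - 2) (by omega) hh.2.2.2.1]
    exact hs _ (Finset.mem_range.2 (by omega))

theorem vanish3 {n : ℕ} {V Q : ℕ → Prop} (hVQ : VQ n V Q)
    {q : MvPolynomial (Fin (2 * n + 1)) ℂ}
    (hq : parHom n V Q q = 0) {f : ℕ → ℂ} (hf : ZZ V Q f) :
    eval (ofC n f) q = 0 := by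
  classical
  obtain ⟨P, hP⟩ : ∃ P : ℕ → Prop, ∀ a, P a ↔ Q a ∧ f (a - 2) = 0 ∧ f (a + 2) = 0 :=
    ⟨_, fun _ => Iff.rfl⟩
  let d : ℕ → ℂ := fun i => if P (i + 1) ∨ P (i - 1) then 1 else 0
  have hPQ : ∀ a, P a → Q a := fun a ha => ((hP a).1 ha).1
  have d0 : ∀ i, V i → d i = 0 := by
    intro i hi
    have h1 : ¬ P (i + 1) := fun h => (hVQ.2 _ (hPQ _ h)).2.2.2.2.1 (by simpa using hi)
    have h2 : ¬ P (i - 1) := fun h => by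
      have := hVQ.2 _ (hPQ _ h)
      rw [show i - 1 + 1 = i by omega] at this
      exact this.2.2.2.2.2.1 hi
    simp [d, h1, h2]
  have dodd : ∀ i, i % 2 = 1 → d i = 0 := by
    intro i hi
    have h1 : ¬ P (i + 1) := fun h => by have := hVQ.2 _ (hPQ _ h); omega
    have h2 : ¬ P (i - 1) := fun h => by have := hVQ.2 _ (hPQ _ h); omega
    simp [d, h1, h2]
  have dm : ∀ a, Q a → d (a - 1) = if P a then 1 else 0 := by
    intro a ha
    have hh := hVQ.2 a ha
    have h1 : ¬ P (a - 2) := fun h => hh.2.2.2.2.2.2.2.1 (hPQ _ h)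
    simp only [d, show a - 1 + 1 = a by omega, show a - 1 - 1 = a - 2 by omega, h1, or_false]
  have dp : ∀ a, Q a → d (a + 1) = if P a then 1 else 0 := by
    intro a ha
    have hh := hVQ.2 a ha
    have h1 : ¬ P (a + 2) := fun h => hh.2.2.2.2.2.2.2.2 (hPQ _ h)
    simp only [d, show a + 1 + 1 = a + 2 by omega, show a + 1 - 1 = a by omega, h1, false_or]
  apply lim_line n q f d
  have hall : ∀ᶠ s in nhdsWithin (0 : ℂ) {0}ᶜ, ∀ i ∈ Finset.range (2 * n + 2), f i + s * 1 ≠ 0 :=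
    (Filter.eventually_all_finset _).2 fun i _ => ev_ne _ _ one_ne_zero
  filter_upwards [hall] with s hs
  apply vanish2 hVQ hq
  · refine ⟨fun i hi => by simp [hf.1 i hi, d0 i hi], fun a ha => ?_⟩
    have hh := hVQ.2 a ha
    beta_reduce
    rw [dodd (a - 2) (by omega), dodd (a + 2) (by omega), dm a ha, dp a ha]
    by_cases hPa : P a
    · obtain ⟨-, h2, h3⟩ := (hP a).1 hPa
      simp [h2, h3]
    · simpa [if_neg hPa] using hf.2 a ha
  · intro a ha h1 h2
    have hh := hVQ.2 a ha
    rw [dodd (a - 2) (by omega)] at h1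
    rw [dodd (a + 2) (by omega)] at h2
    have hPa : P a := (hP a).2 ⟨ha, by simpa using h1, by simpa using h2⟩
    rw [dm a ha, dp a ha, if_pos hPa]
    exact ⟨hs _ (Finset.mem_range.2 (by omega)), hs _ (Finset.mem_range.2 (by omega))⟩

theorem prime_VQ {n : ℕ} {V Q : ℕ → Prop} (hVQ : VQ n V Q) :
    ∃ I : Ideal (MvPolynomial (Fin (2 * n + 1)) ℂ), I.IsPrime ∧
      {z : Fin (2 * n + 1) → ℂ | ZZ V Q (cv z)} = {z | ∀ q ∈ I, eval z q = 0} := by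
  refine ⟨RingHom.ker (parHom n V Q).toRingHom, RingHom.ker_isPrime _, ?_⟩
  ext z
  constructor
  · intro hz q hq
    have := vanish3 hVQ (q := q) hq hz
    rwa [ofC_cv] at this
  · intro hz
    refine ⟨fun i hi => ?_, fun a ha => ?_⟩
    · apply hz (xv n i)
      have := hVQ.1 i hi
      change parHom n V Q (xv n i) = 0
      rw [parHom_xv n V Q i this.1 this.2, par, if_pos hi]
    · rw [← eval_pv]
      apply hz (pv n a)
      have hh := hVQ.2 a ha
      change parHom n V Q (pv n a) = 0
      have n1 : ¬ Q (a - 2 + 1) := fun h => by have := hVQ.2 _ h; omega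
      have n2 : ¬ Q (a - 2 - 1) := fun h => by have := hVQ.2 _ h; omega
      have n3 : ¬ Q (a + 2 + 1) := fun h => by have := hVQ.2 _ h; omega
      have n4 : ¬ Q (a + 2 - 1) := fun h => by have := hVQ.2 _ h; omega
      obtain ⟨-, h3, h4, v1, v2, v3, v4, -, q2⟩ := hh
      have p1 : par V Q (a - 2) = X (a - 2) := by simp only [par, v1, n1, n2, if_false]
      have p2 : par V Q (a + 2) = X (a + 2) := by simp only [par, v4, n3, n4, if_false]
      have p3 : par V Q (a - 1) = X (a + 2) * X (a - 1) := by
        simp only [par, v2, show a - 1 + 1 = a by omega, ha, if_false, if_true,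
          show a - 1 + 3 = a + 2 by omega]
      have p4 : par V Q (a + 1) = - (X (a - 2) * X (a - 1)) := by
        simp only [par, v3, show a + 1 + 1 = a + 2 by omega, q2, show a + 1 - 1 = a by omega,
          ha, if_false, if_true, show a + 1 - 3 = a - 2 by omega, show a + 1 - 2 = a - 1 by omega]
      rw [pv, map_add, map_mul, map_mul, parHom_xv _ _ _ _ (by omega) (by omega),
        parHom_xv _ _ _ _ (by omega) (by omega), parHom_xv _ _ _ _ (by omega) (by omega),
        parHom_xv _ _ _ _ (by omega) (by omega), p1, p2, p3, p4]
      ring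

theorem U2_vars {n : ℕ} {S : Finset ℕ}
    {U : Finset (MvPolynomial (Fin (2 * n + 1)) ℂ)} (h : U2ok n S U) :
    ∃ W : Finset ℕ, (∀ i ∈ W, i = 1 ∨ i = 2) ∧ (5 ∉ S → W = ∅) ∧
      ∀ z : Fin (2 * n + 1) → ℂ, (∀ q ∈ U, eval z q = 0) ↔
        (∀ i ∈ W, cv z i = 0) ∧ (5 ∉ S → cv z 1 * cv z 2 + cv z 4 * cv z 5 = 0) := by
  rcases h with ⟨h1, h2, rfl⟩ | ⟨h1, h2, rfl | rfl⟩ | ⟨h1, h2, rfl⟩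
  · exact ⟨{1, 2}, by simp, by simp [h2], fun z => by simp [eval_xv, h2]⟩
  · exact ⟨{1}, by simp, by simp [h2], fun z => by simp [eval_xv, h2]⟩
  · exact ⟨{2}, by simp, by simp [h2], fun z => by simp [eval_xv, h2]⟩
  · exact ⟨∅, by simp, by simp, fun z => by simp [eval_pv, h2]⟩

theorem U3_vars {n : ℕ} (hn : 3 ≤ n) {S : Finset ℕ}
    {U : Finset (MvPolynomial (Fin (2 * n + 1)) ℂ)} (h : U3ok n S U) :
    ∃ W : Finset ℕ, (∀ i ∈ W, i = 2 * n ∨ i = 2 * n + 1) ∧ (2 * n - 3 ∉ S → W = ∅) ∧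
      ∀ z : Fin (2 * n + 1) → ℂ, (∀ q ∈ U, eval z q = 0) ↔
        (∀ i ∈ W, cv z i = 0) ∧ (2 * n - 3 ∉ S →
          cv z (2 * n - 3) * cv z (2 * n - 2) + cv z (2 * n) * cv z (2 * n + 1) = 0) := by
  have e1 : 2 * n - 1 - 2 = 2 * n - 3 := by omega
  have e2 : 2 * n - 1 - 1 = 2 * n - 2 := by omega
  have e3 : 2 * n - 1 + 1 = 2 * n := by omega
  have e4 : 2 * n - 1 + 2 = 2 * n + 1 := by omega
  rcases h with ⟨h1, h2, rfl⟩ | ⟨h2, h1, rfl | rfl⟩ | ⟨h1, h2, rfl⟩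
  · exact ⟨{2 * n, 2 * n + 1}, by simp, by simp [h2], fun z => by simp [eval_xv, h2]⟩
  · exact ⟨{2 * n}, by simp, by simp [h2], fun z => by simp [eval_xv, h2]⟩
  · exact ⟨{2 * n + 1}, by simp, by simp [h2], fun z => by simp [eval_xv, h2]⟩
  · exact ⟨∅, by simp, by simp, fun z => by simp [eval_pv, h2, e1, e2, e3, e4]⟩

theorem exists_VQ {n : ℕ} (hn : 3 ≤ n) {S : Finset ℕ}
    {B : Finset (MvPolynomial (Fin (2 * n + 1)) ℂ)} (hS : IsFib n S) (hB : IsAdmissible n S B) :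
    ∃ V Q : ℕ → Prop, VQ n V Q ∧ Zset n B = {z | ZZ V Q (cv z)} := by
  obtain ⟨U, U', hU, hU', rfl⟩ := hB
  obtain ⟨W, hW1, hW2, hW3⟩ := U2_vars hU
  obtain ⟨W', hW1', hW2', hW3'⟩ := U3_vars hn hU'
  have e1 : 2 * n - 1 - 2 = 2 * n - 3 := by omega
  have e2 : 2 * n - 1 - 1 = 2 * n - 2 := by omega
  have e3 : 2 * n - 1 + 1 = 2 * n := by omega
  have e4 : 2 * n - 1 + 2 = 2 * n + 1 := by omega
  obtain ⟨Q, hQ⟩ : ∃ Q : ℕ → Prop, ∀ a, Q a ↔ a ∈ Aset' n ∧ a - 2 ∉ S ∧ a + 2 ∉ S :=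
    ⟨_, fun _ => Iff.rfl⟩
  obtain ⟨V, hV⟩ : ∃ V : ℕ → Prop, ∀ i, V i ↔ i ∈ S ∨ i ∈ W ∨ i ∈ W' ∨
      (∃ a ∈ Aset n, (a - 2 ∈ S ∧ a + 2 ∉ S ∧ i = a + 1) ∨ (a - 2 ∉ S ∧ a + 2 ∈ S ∧ i = a - 1)) :=
    ⟨_, fun _ => Iff.rfl⟩
  have hQS : ∀ a, Q a → a ∈ S := by
    intro a ha
    obtain ⟨h1, h2, h3⟩ := (hQ a).1 ha
    rw [mem_Aset'] at h1
    by_cases h : a ≤ 2 * n - 3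
    · exact (fib_pair hS a (by omega) (by omega) h).resolve_right h3
    · have := fib_pair hS (a - 2) (by omega) (by omega) (by omega)
      rw [show a - 2 + 2 = a by omega] at this
      exact this.resolve_left h2
  refine ⟨V, Q, ⟨?_, ?_⟩, ?_⟩
  · intro i hi
    rcases (hV i).1 hi with h | h | h | ⟨a, h, h' | h'⟩
    · have := fib_mem hS h
      omega
    · have := hW1 i h
      omega
    · have := hW1' i h
      omega
    · rw [mem_Aset] at h
      omega
    · rw [mem_Aset] at h
      omega
  · intro a ha
    have haS := hQS a ha
    obtain ⟨h1, h2, h3⟩ := (hQ a).1 ha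
    rw [mem_Aset'] at h1
    have hWa : a = 3 → W = ∅ := fun e => hW2 (by subst e; exact h3)
    have hWa' : a = 2 * n - 1 → W' = ∅ := fun e => hW2' (by rw [← e1, ← e]; exact h2)
    have hWl : ∀ i, a - 2 ≤ i → i ∉ W := by
      intro i hi h
      have := hW1 i h
      have := hWa (by omega)
      simp [this] at h
    have hWr : ∀ i, i ≤ a + 2 → i ∉ W' := by
      intro i hi h
      have := hW1' i h
      have := hWa' (by omega)
      simp [this] at h
    refine ⟨h1.1, h1.2.1, h1.2.2, ?_, ?_, ?_, ?_, ?_, ?_⟩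
    · intro h
      rcases (hV _).1 h with h | h | h | ⟨b, h, h' | h'⟩
      · exact h2 h
      · exact hWl _ (by omega) h
      · exact hWr _ (by omega) h
      · rw [mem_Aset] at h
        omega
      · rw [mem_Aset] at h
        omega
    · intro h
      rcases (hV _).1 h with h | h | h | ⟨b, h, h' | h'⟩
      · have := fib_mem hS h
        omega
      · exact hWl _ (by omega) h
      · exact hWr _ (by omega) h
      · rw [mem_Aset] at h
        obtain rfl : a = b + 2 := by omega
        exact h'.2.1 haS
      · rw [mem_Aset] at h
        obtain rfl : a = b := by omega
        exact h3 h'.2.1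
    · intro h
      rcases (hV _).1 h with h | h | h | ⟨b, h, h' | h'⟩
      · have := fib_mem hS h
        omega
      · exact hWl _ (by omega) h
      · exact hWr _ (by omega) h
      · rw [mem_Aset] at h
        obtain rfl : a = b := by omega
        exact h2 h'.1
      · rw [mem_Aset] at h
        obtain rfl : a = b - 2 := by omega
        exact h'.1 haS
    · intro h
      rcases (hV _).1 h with h | h | h | ⟨b, h, h' | h'⟩
      · exact h3 h
      · exact hWl _ (by omega) h
      · exact hWr _ (by omega) h
      · rw [mem_Aset] at h
        omega
      · rw [mem_Aset] at h
        omega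
    · exact fun h => h2 (hQS _ h)
    · exact fun h => h3 (hQS _ h)
  · ext z
    rw [mem_Z, hW3, hW3']
    constructor
    · rintro ⟨h1, ⟨h2, h3⟩, ⟨h4, h5⟩, h6⟩
      refine ⟨fun i hi => ?_, fun a ha => ?_⟩
      · rcases (hV i).1 hi with h | h | h | ⟨a, h, ⟨k1, k2, rfl⟩ | ⟨k1, k2, rfl⟩⟩
        · exact h1 i h
        · exact h2 i h
        · exact h4 i h
        · exact (Tpart_iff.1 (h6 a h)).1 k1 k2
        · exact (Tpart_iff.1 (h6 a h)).2.1 k1 k2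
      · obtain ⟨k1, k2, k3⟩ := (hQ a).1 ha
        rw [mem_Aset'] at k1
        by_cases a3 : a = 3
        · subst a3
          exact h3 k3
        by_cases an : a = 2 * n - 1
        · subst an
          rw [e1] at k2
          rw [e1, e2, e3, e4]
          exact h5 k2
        exact (Tpart_iff.1 (h6 a (mem_Aset.2 (by omega)))).2.2 k2 k3
    · rintro ⟨h1, h2⟩
      refine ⟨fun i hi => h1 i ((hV i).2 (Or.inl hi)),
        ⟨fun i hi => h1 i ((hV i).2 (Or.inr (Or.inl hi))), fun h => ?_⟩,
        ⟨fun i hi => h1 i ((hV i).2 (Or.inr (Or.inr (Or.inl hi)))), fun h => ?_⟩,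
        fun a ha => Tpart_iff.2 ⟨fun k1 k2 => ?_, fun k1 k2 => ?_, fun k1 k2 => ?_⟩⟩
      · exact h2 3 ((hQ 3).2 ⟨mem_Aset'.2 (by omega),
          fun h => by have := fib_mem hS h; omega, h⟩)
      · have := h2 (2 * n - 1) ((hQ _).2 ⟨mem_Aset'.2 (by omega), by rwa [e1],
          fun h => by have := fib_mem hS h; omega⟩)
        rwa [e1, e2, e3, e4] at this
      · exact h1 _ ((hV _).2 (Or.inr (Or.inr (Or.inr ⟨a, ha, Or.inl ⟨k1, k2, rfl⟩⟩))))
      · exact h1 _ ((hV _).2 (Or.inr (Or.inr (Or.inr ⟨a, ha, Or.inr ⟨k1, k2, rfl⟩⟩))))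
      · have := mem_Aset.1 ha
        exact h2 a ((hQ a).2 ⟨mem_Aset'.2 (by omega), k1, k2⟩)

/-- For `n ≥ 3`, the nullvariety of `P_n^3` is the union of the zero sets `Z(B)` of the
`S`-admissible sets `B` for `S ∈ F̂_n`; each `Z(B)` is the zero locus of a prime ideal;
and for distinct admissible sets `B ≠ B'` neither zero set contains the other.
Hence these `Z(B)` are exactly the irreducible components of the nullvariety. -/
theorem nullvariety_decomposition (n : ℕ) (hn : 3 ≤ n) :
    (nullVariety n =
      ⋃ (S : Finset ℕ) (_ : IsFib n S ∧ GoodRuns S)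
        (B : Finset (MvPolynomial (Fin (2 * n + 1)) ℂ)) (_ : IsAdmissible n S B),
          Zset n B) ∧
    (∀ (S : Finset ℕ) (B : Finset (MvPolynomial (Fin (2 * n + 1)) ℂ)),
      IsFib n S → GoodRuns S → IsAdmissible n S B →
        ∃ I : Ideal (MvPolynomial (Fin (2 * n + 1)) ℂ), I.IsPrime ∧
          Zset n B = {z | ∀ q ∈ I, eval z q = 0}) ∧
    (∀ (S S' : Finset ℕ) (B B' : Finset (MvPolynomial (Fin (2 * n + 1)) ℂ)),
      IsFib n S → GoodRuns S → IsAdmissible n S B →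
      IsFib n S' → GoodRuns S' → IsAdmissible n S' B' →
      B ≠ B' → ¬ Zset n B ⊆ Zset n B' ∧ ¬ Zset n B' ⊆ Zset n B) := by
  refine ⟨?_, ?_, ?_⟩
  · ext z
    simp only [Set.mem_iUnion]
    constructor
    · intro hz
      obtain ⟨S, hS, B, hB, hzB⟩ := NV_sub hn hz
      exact ⟨S, hS, B, hB, hzB⟩
    · rintro ⟨S, hS, B, hB, hzB⟩
      exact Z_sub_NV hn hS.1 hB hzB
  · intro S B hS _ hB
    obtain ⟨V, Q, hVQ, e⟩ := exists_VQ hn hS hB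
    rw [e]
    exact prime_VQ hVQ
  · intro S S' B B' hS hg hB hS' hg' hB' hne
    exact ⟨not_sub hn hS hg hB hS' hB' hne, not_sub hn hS' hg' hB' hS hB hne.symm⟩
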